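/- Let d ≥ 7 be an integer and ω ∈ ℝ. Let u, v ∈ C²([0,∞)) solve the radial stationary Schrödinger–Newton–Hooke system −u″ − ((d−1)/r)u′ + r²u + v·u = ω·u and v″ + ((d−1)/r)v′ = u² for r > 0, with u′(0) = v′(0) = 0. Assume there are C, ε > 0 with |u(r)| + |u′(r)| ≤ C e^{−εr} for all r ≥ 0, that v(r) → 0 as r → ∞, and that u is not identically zero. Then ω ≥ d(d−6)/(d−2) + (8/(d−2)) · (∫₀^∞ r²u(r)² r^{d−1} dr)/(∫₀^∞ u(r)² r^{d−1} dr); in particular ω ≥ d(d−6)/(d−2). -/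

import Mathlib

/-!
Write `N = ‖u‖²`, `K = ‖u'‖²`, `T = ‖r u‖²` and `I = ∫ u² v r^(d-1) dr`. Multiplying the wave
equation by `r^(d-1) u` and integrating gives the energy identity `K + T = ω N - I`. Multiplying it
by the dilation multiplier `r^d u'` gives a second identity, which contains the virial term
`∫ r v' u² r^(d-1) dr`. Multiplying the Poisson equation by `2 r^d v' + (d - 2) r^(d-1) v` shows
that twice the virial term is `-(d - 2) I`. Eliminating it gives the Pohozaev identity
`8 T - (d - 6) I = 4 ω N`, and eliminating `I` as well gives
`(d - 2) ω N = (d - 6) (K + T) + 8 T`. The bound follows from `K + T ≥ d N`, which is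
`0 ≤ ‖u' + r u‖²` after an integration by parts.

The boundary terms at infinity in the identities for `u` are `O(r e)`, where `e` is the integrable
energy density. They have limits, because their derivatives are integrable, and a nonzero limit
would make `1 / r` integrable at infinity.
-/

open Set MeasureTheory Filter

/-- One-sided derivative on `[0,∞)`. -/
noncomputable def dI (u : ℝ → ℝ) : ℝ → ℝ := derivWithin u (Set.Ici 0)

/-- `u` is of class `C²` on `[0,∞)` (with one-sided derivatives at `0`). -/
def C2Ici (u : ℝ → ℝ) : Prop :=
  (∀ r ∈ Set.Ici (0:ℝ), DifferentiableWithinAt ℝ u (Set.Ici 0) r) ∧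
  (∀ r ∈ Set.Ici (0:ℝ), DifferentiableWithinAt ℝ (dI u) (Set.Ici 0) r) ∧
  ContinuousOn (dI (dI u)) (Set.Ici 0)

open Asymptotics Topology

lemma integrableOn_Ioi_of_isBigO {f g : ℝ → ℝ} {a : ℝ} (hf : ContinuousOn f (Ici a))
    (hfg : f =O[atTop] g) (hg : IntegrableAtFilter g atTop) : IntegrableOn f (Ioi a) :=
  ((hf.locallyIntegrableOn measurableSet_Ici).integrableOn_of_isBigO_atTop hfg hg).mono_set
    Ioi_subset_Ici_self

lemma eq_zero_of_tendsto_of_isBigO_id_mul {F e : ℝ → ℝ} {ℓ : ℝ} (he : IntegrableAtFilter e atTop)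
    (hF : F =O[atTop] fun r => r * e r) (hℓ : Tendsto F atTop (𝓝 ℓ)) : ℓ = 0 := by
  by_contra hne
  have hone : (fun _ => ℓ) =O[atTop] fun r => r * e r :=
    ((isEquivalent_const_iff_tendsto hne).2 hℓ).isBigO_symm.trans hF
  have hinv : (fun r : ℝ => r⁻¹) =O[atTop] e := by
    refine ((isBigO_refl (fun r : ℝ => r⁻¹) atTop).mul
      ((isBigO_const_const (1 : ℝ) hne atTop).trans hone)).congr' ?_ ?_
    · simp
    · filter_upwards [eventually_ne_atTop 0] with r hr
      exact inv_mul_cancel_left₀ hr (e r)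
  obtain ⟨s, hs, hint⟩ := hinv.integrableAtFilter
    measurable_inv.aestronglyMeasurable.stronglyMeasurableAtFilter he
  obtain ⟨a, ha⟩ := mem_atTop_sets.1 hs
  exact not_integrableOn_Ioi_inv (hint.mono_set fun r hr => ha r (le_of_lt hr))

lemma integral_Ioi_of_hasDerivAt_of_isBigO_id_mul {F F' e : ℝ → ℝ} {a : ℝ}
    (hcont : ContinuousWithinAt F (Ici a) a) (hderiv : ∀ r ∈ Ioi a, HasDerivAt F (F' r) r)
    (hint : IntegrableOn F' (Ioi a)) (he : IntegrableAtFilter e atTop)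
    (hF : F =O[atTop] fun r => r * e r) : ∫ r in Ioi a, F' r = -F a := by
  have hlim := tendsto_limUnder_of_hasDerivAt_of_integrableOn_Ioi hderiv hint
  rw [integral_Ioi_of_hasDerivAt_of_tendsto hcont hderiv hint hlim,
    eq_zero_of_tendsto_of_isBigO_id_mul he hF hlim, zero_sub]

lemma hasDerivAt_mul_pow_pred {d : ℕ} (hd : d ≠ 0) {f : ℝ → ℝ} {f' r : ℝ} (hr : r ≠ 0)
    (hf : HasDerivAt f f' r) :
    HasDerivAt (fun r => f r * r ^ (d - 1)) ((f' + ((d : ℝ) - 1) / r * f r) * r ^ (d - 1)) r := by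
  obtain ⟨n, rfl⟩ := Nat.exists_eq_succ_of_ne_zero hd
  refine (hf.mul (hasDerivAt_pow n r)).congr_deriv ?_
  cases n with
  | zero => simp
  | succ n =>
    simp only [Nat.succ_eq_add_one, Nat.add_sub_cancel, Nat.cast_add, Nat.cast_one]
    field_simp
    ring

lemma hasDerivAt_dI {f : ℝ → ℝ} (hf : DifferentiableOn ℝ f (Ici 0)) {r : ℝ} (hr : 0 < r) :
    HasDerivAt f (dI f r) r :=
  (hf r hr.le).hasDerivWithinAt.hasDerivAt (Ici_mem_nhds hr)

namespace C2Ici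

variable {f : ℝ → ℝ}

lemma differentiableOn (hf : C2Ici f) : DifferentiableOn ℝ f (Ici 0) := hf.1

lemma differentiableOn_dI (hf : C2Ici f) : DifferentiableOn ℝ (dI f) (Ici 0) := hf.2.1

lemma continuousOn (hf : C2Ici f) : ContinuousOn f (Ici 0) := hf.differentiableOn.continuousOn

lemma continuousOn_dI (hf : C2Ici f) : ContinuousOn (dI f) (Ici 0) :=
  hf.differentiableOn_dI.continuousOn

end C2Ici

/-- The mass `‖u‖²` in the radial norm of dimension `d`. -/
noncomputable def mass (d : ℕ) (u : ℝ → ℝ) : ℝ :=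
  ∫ r in Ioi (0 : ℝ), (u r) ^ 2 * r ^ (d - 1)

/-- The kinetic energy `‖u'‖²` in the radial norm of dimension `d`. -/
noncomputable def kineticEnergy (d : ℕ) (u : ℝ → ℝ) : ℝ :=
  ∫ r in Ioi (0 : ℝ), (dI u r) ^ 2 * r ^ (d - 1)

/-- The energy `‖r u‖²` in the harmonic trap, in the radial norm of dimension `d`. -/
noncomputable def trapEnergy (d : ℕ) (u : ℝ → ℝ) : ℝ :=
  ∫ r in Ioi (0 : ℝ), r ^ 2 * (u r) ^ 2 * r ^ (d - 1)

/-- The interaction energy `∫ u² v r^(d-1) dr` of `u` with the potential `v`. -/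
noncomputable def interactionEnergy (d : ℕ) (u v : ℝ → ℝ) : ℝ :=
  ∫ r in Ioi (0 : ℝ), v r * (u r) ^ 2 * r ^ (d - 1)

/-- The radial energy density of the harmonic oscillator. Its integrability on `(0,∞)` expresses
that `‖u'‖` and `‖r u‖` are finite. -/
noncomputable def energyDensity (d : ℕ) (u : ℝ → ℝ) (r : ℝ) : ℝ :=
  ((dI u r) ^ 2 + r ^ 2 * (u r) ^ 2) * r ^ (d - 1)

section EnergyDensity

variable {d : ℕ} {u : ℝ → ℝ}

lemma isBigO_energyDensity {f : ℝ → ℝ}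
    (hf : ∀ r, 1 ≤ r → |f r| ≤ (dI u r) ^ 2 + r ^ 2 * (u r) ^ 2) :
    (fun r => f r * r ^ (d - 1)) =O[atTop] energyDensity d u := by
  refine (IsBigO.of_bound' ?_).mul (isBigO_refl _ _)
  filter_upwards [eventually_ge_atTop 1] with r hr
  exact (hf r hr).trans (le_abs_self _)

lemma isBigO_dI_sq_energyDensity :
    (fun r => (dI u r) ^ 2 * r ^ (d - 1)) =O[atTop] energyDensity d u :=
  isBigO_energyDensity fun r _ => by
    rw [abs_of_nonneg (sq_nonneg _)]
    exact le_add_of_nonneg_right (by positivity)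

lemma isBigO_sq_mul_sq_energyDensity :
    (fun r => r ^ 2 * (u r) ^ 2 * r ^ (d - 1)) =O[atTop] energyDensity d u :=
  isBigO_energyDensity fun r _ => by
    rw [abs_of_nonneg (by positivity)]
    exact le_add_of_nonneg_left (sq_nonneg _)

lemma isBigO_sq_energyDensity :
    (fun r => (u r) ^ 2 * r ^ (d - 1)) =O[atTop] energyDensity d u :=
  isBigO_energyDensity fun r hr => by
    rw [abs_of_nonneg (sq_nonneg _)]
    exact (le_mul_of_one_le_left (sq_nonneg _) (one_le_pow₀ hr)).trans
      (le_add_of_nonneg_left (sq_nonneg _))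

lemma isBigO_id_mul_mul_dI_energyDensity :
    (fun r => r * (u r * dI u r) * r ^ (d - 1)) =O[atTop] energyDensity d u :=
  isBigO_energyDensity fun r _ => abs_le.2
    ⟨by nlinarith [sq_nonneg (dI u r + r * u r)], by nlinarith [sq_nonneg (dI u r - r * u r)]⟩

lemma isBigO_mul_dI_energyDensity :
    (fun r => u r * dI u r * r ^ (d - 1)) =O[atTop] energyDensity d u :=
  isBigO_energyDensity fun r hr => by
    have hsq : (u r) ^ 2 ≤ r ^ 2 * (u r) ^ 2 :=
      le_mul_of_one_le_left (sq_nonneg _) (one_le_pow₀ hr)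
    exact abs_le.2
      ⟨by nlinarith [sq_nonneg (dI u r + u r)], by nlinarith [sq_nonneg (dI u r - u r)]⟩

end EnergyDensity

lemma mass_pos {d : ℕ} {u : ℝ → ℝ} (hu : ContinuousOn u (Ici 0))
    (hint : IntegrableOn (fun r => (u r) ^ 2 * r ^ (d - 1)) (Ioi 0))
    (hne : ∃ r : ℝ, 0 ≤ r ∧ u r ≠ 0) : 0 < mass d u := by
  have hnonneg : ∀ r ∈ Ioi (0 : ℝ), 0 ≤ (u r) ^ 2 * r ^ (d - 1) := fun r hr =>
    mul_nonneg (sq_nonneg _) (pow_nonneg (le_of_lt hr) _)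
  rw [mass, setIntegral_pos_iff_support_of_nonneg_ae
    ((ae_restrict_iff' measurableSet_Ioi).2 (ae_of_all _ hnonneg)) hint]
  have hopen : IsOpen (Ioi (0 : ℝ) ∩ u ⁻¹' {0}ᶜ) :=
    (hu.mono Ioi_subset_Ici_self).isOpen_inter_preimage isOpen_Ioi isOpen_compl_singleton
  have hnonempty : (Ioi (0 : ℝ) ∩ u ⁻¹' {0}ᶜ).Nonempty := by
    by_contra hempty
    have hzero : EqOn u (fun _ => 0) (Ioi 0) := fun r hr => by
      by_contra h
      exact hempty ⟨r, hr, h⟩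
    obtain ⟨r, hr, hur⟩ := hne
    exact hur (hzero.of_subset_closure hu continuousOn_const Ioi_subset_Ici_self
      (by rw [closure_Ioi]) hr)
  refine (hopen.measure_pos volume hnonempty).trans_le (measure_mono ?_)
  rintro r ⟨hr, hur⟩
  exact ⟨mul_ne_zero (pow_ne_zero _ hur) (pow_ne_zero _ (ne_of_gt hr)), hr⟩

lemma trapEnergy_nonneg (d : ℕ) (u : ℝ → ℝ) : 0 ≤ trapEnergy d u :=
  setIntegral_nonneg measurableSet_Ioi fun r hr =>
    mul_nonneg (by positivity) (pow_nonneg (le_of_lt hr) _)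

section FiniteEnergy

variable {d : ℕ} {u : ℝ → ℝ}

lemma integrableOn_sq_mul_pow (hu : ContinuousOn u (Ici 0))
    (hE : IntegrableOn (energyDensity d u) (Ioi 0)) :
    IntegrableOn (fun r => (u r) ^ 2 * r ^ (d - 1)) (Ioi 0) :=
  integrableOn_Ioi_of_isBigO (by fun_prop) isBigO_sq_energyDensity ⟨_, Ioi_mem_atTop 0, hE⟩

lemma integrableOn_sq_mul_sq_mul_pow (hu : ContinuousOn u (Ici 0))
    (hE : IntegrableOn (energyDensity d u) (Ioi 0)) :
    IntegrableOn (fun r => r ^ 2 * (u r) ^ 2 * r ^ (d - 1)) (Ioi 0) :=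
  integrableOn_Ioi_of_isBigO (by fun_prop) isBigO_sq_mul_sq_energyDensity ⟨_, Ioi_mem_atTop 0, hE⟩

lemma integrableOn_dI_sq_mul_pow (hu' : ContinuousOn (dI u) (Ici 0))
    (hE : IntegrableOn (energyDensity d u) (Ioi 0)) :
    IntegrableOn (fun r => (dI u r) ^ 2 * r ^ (d - 1)) (Ioi 0) :=
  integrableOn_Ioi_of_isBigO (by fun_prop) isBigO_dI_sq_energyDensity ⟨_, Ioi_mem_atTop 0, hE⟩

lemma integrableOn_id_mul_mul_dI_mul_pow (hu : ContinuousOn u (Ici 0))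
    (hu' : ContinuousOn (dI u) (Ici 0)) (hE : IntegrableOn (energyDensity d u) (Ioi 0)) :
    IntegrableOn (fun r => r * (u r * dI u r) * r ^ (d - 1)) (Ioi 0) :=
  integrableOn_Ioi_of_isBigO (by fun_prop) isBigO_id_mul_mul_dI_energyDensity
    ⟨_, Ioi_mem_atTop 0, hE⟩

lemma integral_energyDensity (hu : ContinuousOn u (Ici 0)) (hu' : ContinuousOn (dI u) (Ici 0))
    (hE : IntegrableOn (energyDensity d u) (Ioi 0)) :
    ∫ r in Ioi (0 : ℝ), energyDensity d u r = kineticEnergy d u + trapEnergy d u := by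
  rw [kineticEnergy, trapEnergy, ← integral_add (integrableOn_dI_sq_mul_pow hu' hE)
    (integrableOn_sq_mul_sq_mul_pow hu hE)]
  simp only [energyDensity, add_mul]

lemma integral_id_mul_mul_dI (hd : d ≠ 0) (hu : DifferentiableOn ℝ u (Ici 0))
    (hu' : ContinuousOn (dI u) (Ici 0)) (hE : IntegrableOn (energyDensity d u) (Ioi 0)) :
    2 * ∫ r in Ioi (0 : ℝ), r * (u r * dI u r) * r ^ (d - 1) = -(d * mass d u) := by
  have huc := hu.continuousOn
  have hmass := integrableOn_sq_mul_pow huc hE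
  have hcross := integrableOn_id_mul_mul_dI_mul_pow huc hu' hE
  have hdiv : ∀ r ∈ Ioi (0 : ℝ), HasDerivAt (fun r => r * (u r) ^ 2 * r ^ (d - 1))
      (2 * (r * (u r * dI u r) * r ^ (d - 1)) + d * ((u r) ^ 2 * r ^ (d - 1))) r := by
    intro r (hr : 0 < r)
    refine (hasDerivAt_mul_pow_pred hd hr.ne'
      ((hasDerivAt_id r).mul ((hasDerivAt_dI hu hr).pow 2))).congr_deriv ?_
    simp only [Pi.pow_apply, one_mul, id_eq, Nat.cast_ofNat, Nat.add_one_sub_one, pow_one,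
      Pi.mul_apply]
    field_simp
    ring
  have hboundary : (fun r => r * (u r) ^ 2 * r ^ (d - 1)) =O[atTop]
      fun r => r * energyDensity d u r := by
    simpa only [mul_assoc] using (isBigO_refl (fun r : ℝ => r) atTop).mul isBigO_sq_energyDensity
  have hzero := integral_Ioi_of_hasDerivAt_of_isBigO_id_mul
    (ContinuousOn.continuousWithinAt (by fun_prop) self_mem_Ici) hdiv
    ((hcross.const_mul 2).add (hmass.const_mul d)) ⟨_, Ioi_mem_atTop 0, hE⟩ hboundary
  rw [integral_add (hcross.const_mul 2) (hmass.const_mul d), integral_const_mul,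
    integral_const_mul] at hzero
  rw [mass]
  linarith

lemma mul_mass_le_kineticEnergy_add_trapEnergy (hd : d ≠ 0) (hu : DifferentiableOn ℝ u (Ici 0))
    (hu' : ContinuousOn (dI u) (Ici 0)) (hE : IntegrableOn (energyDensity d u) (Ioi 0)) :
    d * mass d u ≤ kineticEnergy d u + trapEnergy d u := by
  have huc := hu.continuousOn
  have hcross := integrableOn_id_mul_mul_dI_mul_pow huc hu' hE
  have hsquare : 0 ≤ ∫ r in Ioi (0 : ℝ), (dI u r + r * u r) ^ 2 * r ^ (d - 1) :=
    setIntegral_nonneg measurableSet_Ioi fun r hr =>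
      mul_nonneg (sq_nonneg _) (pow_nonneg (le_of_lt hr) _)
  have hexpand : ∫ r in Ioi (0 : ℝ), (dI u r + r * u r) ^ 2 * r ^ (d - 1) =
      kineticEnergy d u + trapEnergy d u
        + 2 * ∫ r in Ioi (0 : ℝ), r * (u r * dI u r) * r ^ (d - 1) := by
    rw [← integral_energyDensity huc hu' hE, ← integral_const_mul,
      ← integral_add hE (hcross.const_mul 2)]
    congr! 2 with r
    rw [energyDensity]
    ring
  rw [hexpand, integral_id_mul_mul_dI hd hu hu' hE] at hsquare
  linarith

end FiniteEnergy

/-- The quantity whose boundary values appear when the wave equation is multiplied by `r^d u'` and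
integrated over `(0,∞)`. -/
noncomputable def pohozaevFlux (d : ℕ) (ω : ℝ) (u v : ℝ → ℝ) (r : ℝ) : ℝ :=
  r * ((dI u r) ^ 2 - (r ^ 2 + v r - ω) * (u r) ^ 2) * r ^ (d - 1)

lemma isBigO_pohozaevFlux {d : ℕ} {ω : ℝ} {u v : ℝ → ℝ} (hv : v =O[atTop] fun _ => (1 : ℝ)) :
    pohozaevFlux d ω u v =O[atTop] fun r => r * energyDensity d u r := by
  have hinter : (fun r => v r * ((u r) ^ 2 * r ^ (d - 1))) =O[atTop] energyDensity d u := by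
    simpa only [one_mul] using hv.mul isBigO_sq_energyDensity
  refine ((isBigO_refl (fun r : ℝ => r) atTop).mul
    (((isBigO_dI_sq_energyDensity.sub isBigO_sq_mul_sq_energyDensity).sub hinter).add
      (isBigO_sq_energyDensity.const_mul_left ω))).congr_left fun r => ?_
  rw [pohozaevFlux]
  ring

/-- `C²` solutions on `[0,∞)` of the radial stationary Schrödinger–Newton–Hooke system with
frequency `ω` in dimension `d`. -/
structure IsStationaryState (d : ℕ) (ω : ℝ) (u v : ℝ → ℝ) : Prop where
  wave_c2 : C2Ici u
  potential_c2 : C2Ici v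
  wave_eq : ∀ r : ℝ, 0 < r →
    -dI (dI u) r - ((d : ℝ) - 1) / r * dI u r + r ^ 2 * u r + v r * u r = ω * u r
  poisson_eq : ∀ r : ℝ, 0 < r → dI (dI v) r + ((d : ℝ) - 1) / r * dI v r = (u r) ^ 2

namespace IsStationaryState

variable {d : ℕ} {ω : ℝ} {u v : ℝ → ℝ}

lemma isBigO_one_dI_potential_mul_pow (h : IsStationaryState d ω u v) (hd : d ≠ 0)
    (hE : IntegrableOn (energyDensity d u) (Ioi 0)) :
    (fun r => dI v r * r ^ (d - 1)) =O[atTop] fun _ => (1 : ℝ) := by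
  have hflux : ∀ r ∈ Ioi (0 : ℝ),
      HasDerivAt (fun r => dI v r * r ^ (d - 1)) ((u r) ^ 2 * r ^ (d - 1)) r := by
    intro r (hr : 0 < r)
    rw [← h.poisson_eq r hr]
    exact hasDerivAt_mul_pow_pred hd hr.ne' (hasDerivAt_dI h.potential_c2.differentiableOn_dI hr)
  exact (tendsto_limUnder_of_hasDerivAt_of_integrableOn_Ioi hflux
    (integrableOn_sq_mul_pow h.wave_c2.continuousOn hE)).isBigO_one ℝ

lemma tendsto_id_mul_dI_potential (h : IsStationaryState d ω u v) (hd : 3 ≤ d)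
    (hE : IntegrableOn (energyDensity d u) (Ioi 0)) :
    Tendsto (fun r => r * dI v r) atTop (𝓝 0) := by
  have hdecay : Tendsto (fun r : ℝ => (r ^ (d - 2))⁻¹) atTop (𝓝 0) :=
    tendsto_inv_atTop_zero.comp (tendsto_pow_atTop (by omega))
  refine (((h.isBigO_one_dI_potential_mul_pow (by omega) hE).mul (isBigO_refl _ _)).trans_tendsto
    (by simpa only [one_mul] using hdecay)).congr' ?_
  filter_upwards [eventually_gt_atTop 0] with r hr
  rw [show d - 1 = d - 2 + 1 by omega, pow_succ]
  field_simp

lemma integrableOn_interaction (h : IsStationaryState d ω u v)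
    (hE : IntegrableOn (energyDensity d u) (Ioi 0)) (hv : v =O[atTop] fun _ => (1 : ℝ)) :
    IntegrableOn (fun r => v r * (u r) ^ 2 * r ^ (d - 1)) (Ioi 0) := by
  have huc := h.wave_c2.continuousOn
  have hvc := h.potential_c2.continuousOn
  refine integrableOn_Ioi_of_isBigO (by fun_prop) ?_ ⟨_, Ioi_mem_atTop 0, hE⟩
  simpa only [mul_assoc, one_mul] using hv.mul isBigO_sq_energyDensity

lemma integrableOn_virial (h : IsStationaryState d ω u v) (hd : 3 ≤ d)
    (hE : IntegrableOn (energyDensity d u) (Ioi 0)) :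
    IntegrableOn (fun r => r * dI v r * (u r) ^ 2 * r ^ (d - 1)) (Ioi 0) := by
  have huc := h.wave_c2.continuousOn
  have hvc := h.potential_c2.continuousOn_dI
  refine integrableOn_Ioi_of_isBigO (by fun_prop) ?_ ⟨_, Ioi_mem_atTop 0, hE⟩
  simpa only [mul_assoc, one_mul] using
    ((h.tendsto_id_mul_dI_potential hd hE).isBigO_one ℝ).mul isBigO_sq_energyDensity

lemma energy_identity (h : IsStationaryState d ω u v) (hd : 2 ≤ d)
    (hE : IntegrableOn (energyDensity d u) (Ioi 0)) (hv : v =O[atTop] fun _ => (1 : ℝ)) :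
    kineticEnergy d u + trapEnergy d u = ω * mass d u - interactionEnergy d u v := by
  have huc := h.wave_c2.continuousOn
  have hu'c := h.wave_c2.continuousOn_dI
  have hmass := integrableOn_sq_mul_pow huc hE
  have hinter := h.integrableOn_interaction hE hv
  have hsum : IntegrableOn
      (fun r => energyDensity d u r + v r * (u r) ^ 2 * r ^ (d - 1)) (Ioi 0) := hE.add hinter
  have hderiv : ∀ r ∈ Ioi (0 : ℝ), HasDerivAt (fun r => u r * dI u r * r ^ (d - 1))
      (energyDensity d u r + v r * (u r) ^ 2 * r ^ (d - 1) - ω * ((u r) ^ 2 * r ^ (d - 1))) r := by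
    intro r (hr : 0 < r)
    refine (hasDerivAt_mul_pow_pred (by omega) hr.ne'
      ((hasDerivAt_dI h.wave_c2.differentiableOn hr).mul
        (hasDerivAt_dI h.wave_c2.differentiableOn_dI hr))).congr_deriv ?_
    simp only [Pi.mul_apply, energyDensity]
    linear_combination -(u r * r ^ (d - 1)) * h.wave_eq r hr
  have hboundary : (fun r => u r * dI u r * r ^ (d - 1)) =O[atTop]
      fun r => r * energyDensity d u r := by
    simpa only [one_mul, id_eq] using
      (isLittleO_const_id_atTop (1 : ℝ)).isBigO.mul isBigO_mul_dI_energyDensity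
  have hzero := integral_Ioi_of_hasDerivAt_of_isBigO_id_mul
    (ContinuousOn.continuousWithinAt (by fun_prop) self_mem_Ici) hderiv
    (hsum.sub (hmass.const_mul ω)) ⟨_, Ioi_mem_atTop 0, hE⟩ hboundary
  rw [integral_sub hsum (hmass.const_mul ω), integral_add hE hinter,
    integral_energyDensity huc hu'c hE, integral_const_mul, zero_pow (by omega), mul_zero,
    neg_zero] at hzero
  rw [mass, interactionEnergy]
  linarith

lemma hasDerivAt_pohozaevFlux (h : IsStationaryState d ω u v) (hd : d ≠ 0) {r : ℝ} (hr : 0 < r) :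
    HasDerivAt (pohozaevFlux d ω u v)
      (d * ω * ((u r) ^ 2 * r ^ (d - 1))
        - (d * (v r * (u r) ^ 2 * r ^ (d - 1)) + r * dI v r * (u r) ^ 2 * r ^ (d - 1))
        - ((d - 2) * energyDensity d u r + 4 * (r ^ 2 * (u r) ^ 2 * r ^ (d - 1)))) r := by
  have hdu := hasDerivAt_dI h.wave_c2.differentiableOn hr
  have hddu := hasDerivAt_dI h.wave_c2.differentiableOn_dI hr
  have hdv := hasDerivAt_dI h.potential_c2.differentiableOn hr
  have hpotential : HasDerivAt (fun r => r ^ 2 + v r - ω) (2 * r + dI v r) r := by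
    simpa using ((hasDerivAt_pow 2 r).add hdv).sub_const ω
  refine (hasDerivAt_mul_pow_pred hd hr.ne' ((hasDerivAt_id r).mul
    ((hddu.pow 2).sub (hpotential.mul (hdu.pow 2))))).congr_deriv ?_
  have hwave : dI (dI u) r =
      (r ^ 2 + v r - ω) * u r - ((d : ℝ) - 1) / r * dI u r := by
    linarith [h.wave_eq r hr]
  simp only [Pi.sub_apply, Pi.pow_apply, Pi.mul_apply, one_mul, id_eq, Nat.cast_ofNat,
    Nat.add_one_sub_one, pow_one, hwave, energyDensity]
  field_simp
  ring

lemma wave_virial_identity (h : IsStationaryState d ω u v) (hd : 3 ≤ d)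
    (hE : IntegrableOn (energyDensity d u) (Ioi 0)) (hv : v =O[atTop] fun _ => (1 : ℝ)) :
    (d - 2) * (kineticEnergy d u + trapEnergy d u) + 4 * trapEnergy d u
      + d * interactionEnergy d u v
      + ∫ r in Ioi (0 : ℝ), r * dI v r * (u r) ^ 2 * r ^ (d - 1) = d * ω * mass d u := by
  have huc := h.wave_c2.continuousOn
  have hu'c := h.wave_c2.continuousOn_dI
  have hvc := h.potential_c2.continuousOn
  have hmass := integrableOn_sq_mul_pow huc hE
  have htrap := integrableOn_sq_mul_sq_mul_pow huc hE
  have hinter := h.integrableOn_interaction hE hv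
  have hvirial := h.integrableOn_virial hd hE
  have hpotential : IntegrableOn (fun r => d * (v r * (u r) ^ 2 * r ^ (d - 1))
      + r * dI v r * (u r) ^ 2 * r ^ (d - 1)) (Ioi 0) := (hinter.const_mul _).add hvirial
  have hmass_sub : IntegrableOn (fun r => d * ω * ((u r) ^ 2 * r ^ (d - 1))
      - (d * (v r * (u r) ^ 2 * r ^ (d - 1)) + r * dI v r * (u r) ^ 2 * r ^ (d - 1))) (Ioi 0) :=
    (hmass.const_mul _).sub hpotential
  have hoscillator : IntegrableOn (fun r => (d - 2) * energyDensity d u r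
      + 4 * (r ^ 2 * (u r) ^ 2 * r ^ (d - 1))) (Ioi 0) :=
    (hE.const_mul _).add (htrap.const_mul _)
  have hcont : ContinuousOn (pohozaevFlux d ω u v) (Ici 0) := by unfold pohozaevFlux; fun_prop
  have hzero := integral_Ioi_of_hasDerivAt_of_isBigO_id_mul (hcont 0 self_mem_Ici)
    (fun r hr => h.hasDerivAt_pohozaevFlux (by omega) hr) (hmass_sub.sub hoscillator)
    ⟨_, Ioi_mem_atTop 0, hE⟩ (isBigO_pohozaevFlux hv)
  rw [integral_sub hmass_sub hoscillator, integral_sub (hmass.const_mul _) hpotential,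
    integral_add (hinter.const_mul _) hvirial, integral_add (hE.const_mul _) (htrap.const_mul _)]
    at hzero
  simp only [integral_const_mul, integral_energyDensity huc hu'c hE, pohozaevFlux,
    zero_mul, neg_zero] at hzero
  rw [mass, interactionEnergy]
  rw [trapEnergy] at hzero ⊢
  linarith

lemma potential_virial_identity (h : IsStationaryState d ω u v) (hd : 3 ≤ d)
    (hE : IntegrableOn (energyDensity d u) (Ioi 0)) (hv : Tendsto v atTop (𝓝 0)) :
    2 * ∫ r in Ioi (0 : ℝ), r * dI v r * (u r) ^ 2 * r ^ (d - 1) =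
      -((d - 2) * interactionEnergy d u v) := by
  have hvc := h.potential_c2.continuousOn
  have hv'c := h.potential_c2.continuousOn_dI
  have hvirial := h.integrableOn_virial hd hE
  have hinter := h.integrableOn_interaction hE (hv.isBigO_one ℝ)
  have hderiv : ∀ r ∈ Ioi (0 : ℝ),
      HasDerivAt (fun r => (r * dI v r + (d - 2) * v r) * dI v r * r ^ (d - 1))
        (2 * (r * dI v r * (u r) ^ 2 * r ^ (d - 1))
          + (d - 2) * (v r * (u r) ^ 2 * r ^ (d - 1))) r := by
    intro r (hr : 0 < r)
    have hdv := hasDerivAt_dI h.potential_c2.differentiableOn hr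
    have hddv := hasDerivAt_dI h.potential_c2.differentiableOn_dI hr
    refine (hasDerivAt_mul_pow_pred (by omega) hr.ne'
      ((((hasDerivAt_id r).mul hddv).add (hdv.const_mul ((d : ℝ) - 2))).mul hddv)).congr_deriv ?_
    rw [← h.poisson_eq r hr]
    simp only [one_mul, id_eq, Pi.add_apply, Pi.mul_apply]
    field_simp
    ring
  have hlim : Tendsto (fun r => (r * dI v r + (d - 2) * v r) * dI v r * r ^ (d - 1)) atTop
      (𝓝 0) := by
    have hfactor : Tendsto (fun r => r * dI v r + (d - 2) * v r) atTop (𝓝 0) := by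
      simpa using (h.tendsto_id_mul_dI_potential hd hE).add (hv.const_mul ((d : ℝ) - 2))
    simpa only [mul_assoc] using ((isBigO_refl _ _).mul
      (h.isBigO_one_dI_potential_mul_pow (by omega) hE)).trans_tendsto
        (by simpa only [mul_one] using hfactor)
  have hzero := integral_Ioi_of_hasDerivAt_of_tendsto
    (ContinuousOn.continuousWithinAt (by fun_prop) self_mem_Ici) hderiv
    ((hvirial.const_mul 2).add (hinter.const_mul _)) hlim
  rw [integral_add (hvirial.const_mul 2) (hinter.const_mul _), integral_const_mul,
    integral_const_mul, zero_pow (by omega), mul_zero, sub_zero] at hzero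
  rw [interactionEnergy]
  linarith

lemma pohozaev_identity (h : IsStationaryState d ω u v) (hd : 3 ≤ d)
    (hE : IntegrableOn (energyDensity d u) (Ioi 0)) (hv : Tendsto v atTop (𝓝 0)) :
    8 * trapEnergy d u - (d - 6) * interactionEnergy d u v = 4 * ω * mass d u := by
  have henergy := h.energy_identity (by omega) hE (hv.isBigO_one ℝ)
  have hwave := h.wave_virial_identity hd hE (hv.isBigO_one ℝ)
  have hpotential := h.potential_virial_identity hd hE hv
  linear_combination 2 * hwave - 2 * (d - 2) * henergy - hpotential

end IsStationaryState

lemma integrableOn_pow_mul_exp_neg_mul (n : ℕ) {b : ℝ} (hb : 0 < b) :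
    IntegrableOn (fun r : ℝ => r ^ n * Real.exp (-b * r)) (Ioi 0) := by
  simpa only [Real.rpow_natCast, Real.rpow_one] using
    integrableOn_rpow_mul_exp_neg_mul_rpow (neg_one_lt_zero.trans_le n.cast_nonneg) one_pos hb

lemma energyDensity_le {d : ℕ} {u : ℝ → ℝ} {r K : ℝ} (hr : 1 ≤ r)
    (hK : |u r| + |dI u r| ≤ K) : energyDensity d u r ≤ K ^ 2 * r ^ (2 + (d - 1)) := by
  have hsq : (dI u r) ^ 2 + (u r) ^ 2 ≤ K ^ 2 := by
    calc (dI u r) ^ 2 + (u r) ^ 2 ≤ (|u r| + |dI u r|) ^ 2 := by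
          rw [← sq_abs (u r), ← sq_abs (dI u r)]
          nlinarith [mul_nonneg (abs_nonneg (u r)) (abs_nonneg (dI u r))]
      _ ≤ K ^ 2 := by gcongr
  calc energyDensity d u r ≤ r ^ 2 * ((dI u r) ^ 2 + (u r) ^ 2) * r ^ (d - 1) := by
        rw [energyDensity, mul_add]
        gcongr
        exact le_mul_of_one_le_left (sq_nonneg _) (one_le_pow₀ hr)
    _ ≤ r ^ 2 * K ^ 2 * r ^ (d - 1) := by gcongr
    _ = K ^ 2 * r ^ (2 + (d - 1)) := by ring

lemma integrableOn_energyDensity_of_exp_decay {d : ℕ} {u : ℝ → ℝ} {C ε : ℝ} (hε : 0 < ε)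
    (hu : ContinuousOn u (Ici 0)) (hu' : ContinuousOn (dI u) (Ici 0))
    (hdecay : ∀ r : ℝ, 0 ≤ r → |u r| + |dI u r| ≤ C * Real.exp (-ε * r)) :
    IntegrableOn (energyDensity d u) (Ioi 0) := by
  have hbound : energyDensity d u =O[atTop]
      fun r => r ^ (2 + (d - 1)) * Real.exp (-(2 * ε) * r) := by
    refine IsBigO.of_bound (C ^ 2) ?_
    filter_upwards [eventually_ge_atTop 1] with r hr
    have hr0 : 0 ≤ r := zero_le_one.trans hr
    have hexp_sq : Real.exp (-ε * r) ^ 2 = Real.exp (-(2 * ε) * r) := by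
      rw [← Real.exp_nat_mul]
      congr 1
      push_cast
      ring
    rw [Real.norm_of_nonneg (by unfold energyDensity; positivity),
      Real.norm_of_nonneg (by positivity)]
    refine (energyDensity_le hr (hdecay r hr0)).trans_eq ?_
    rw [mul_pow, hexp_sq]
    ring
  exact integrableOn_Ioi_of_isBigO (by unfold energyDensity; fun_prop) hbound
    ⟨_, Ioi_mem_atTop 0, integrableOn_pow_mul_exp_neg_mul _ (mul_pos two_pos hε)⟩

theorem stmt7_general {d : ℕ} (hd : 6 ≤ d) {ω : ℝ} {u v : ℝ → ℝ}
    (h : IsStationaryState d ω u v) (hE : IntegrableOn (energyDensity d u) (Ioi 0))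
    (hvlim : Tendsto v atTop (𝓝 0)) (hne : ∃ r : ℝ, 0 ≤ r ∧ u r ≠ 0) :
    ω ≥ d * (d - 6) / (d - 2) + 8 / (d - 2) * (trapEnergy d u / mass d u)
    ∧ ω ≥ d * (d - 6) / (d - 2) := by
  have hd' : (6 : ℝ) ≤ d := by exact_mod_cast hd
  have hd2 : (0 : ℝ) < d - 2 := by linarith
  have hu := h.wave_c2
  have hmass : 0 < mass d u :=
    mass_pos hu.continuousOn (integrableOn_sq_mul_pow hu.continuousOn hE) hne
  have hspectral : d * mass d u ≤ kineticEnergy d u + trapEnergy d u :=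
    mul_mass_le_kineticEnergy_add_trapEnergy (by omega) hu.differentiableOn hu.continuousOn_dI hE
  have henergy := h.energy_identity (by omega) hE (hvlim.isBigO_one ℝ)
  have hpohozaev := h.pohozaev_identity (by omega) hE hvlim
  have hfreq : d * (d - 6) * mass d u + 8 * trapEnergy d u ≤ (d - 2) * ω * mass d u := by
    linear_combination (d - 6 : ℝ) * hspectral + (d - 6 : ℝ) * henergy + hpohozaev
  have hbound : d * (d - 6) / (d - 2) + 8 / (d - 2) * (trapEnergy d u / mass d u) ≤ ω := by
    rw [show d * (d - 6) / (d - 2) + 8 / (d - 2) * (trapEnergy d u / mass d u) =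
        (d * (d - 6) * mass d u + 8 * trapEnergy d u) / ((d - 2) * mass d u) by field_simp,
      div_le_iff₀ (by positivity)]
    linarith
  have htrap : 0 ≤ 8 / (d - 2) * (trapEnergy d u / mass d u) :=
    mul_nonneg (by positivity) (div_nonneg (trapEnergy_nonneg d u) hmass.le)
  exact ⟨hbound, by linarith⟩

/-- Improved lower bound for the frequency of bound states of the radial stationary
Schrödinger–Newton–Hooke system in supercritical dimensions `d ≥ 7`. -/
theorem stmt7 (d : ℕ) (hd : 7 ≤ d) (ω : ℝ) (u v : ℝ → ℝ)
    (hu : C2Ici u) (hv : C2Ici v)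
    (hequ : ∀ r : ℝ, 0 < r →
      -dI (dI u) r - ((d:ℝ) - 1) / r * dI u r + r^2 * u r + v r * u r = ω * u r)
    (heqv : ∀ r : ℝ, 0 < r →
      dI (dI v) r + ((d:ℝ) - 1) / r * dI v r = (u r)^2)
    (hu'0 : dI u 0 = 0) (hv'0 : dI v 0 = 0)
    (C ε : ℝ) (hC : 0 < C) (hε : 0 < ε)
    (hdecay : ∀ r : ℝ, 0 ≤ r → |u r| + |dI u r| ≤ C * Real.exp (-ε * r))
    (hvlim : Tendsto v atTop (nhds 0))
    (hne : ∃ r : ℝ, 0 ≤ r ∧ u r ≠ 0) :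
    ω ≥ (d:ℝ) * ((d:ℝ) - 6) / ((d:ℝ) - 2)
        + (8 / ((d:ℝ) - 2)) *
          ((∫ r in Ioi (0:ℝ), r^2 * (u r)^2 * r^(d-1)) /
            (∫ r in Ioi (0:ℝ), (u r)^2 * r^(d-1)))
    ∧ ω ≥ (d:ℝ) * ((d:ℝ) - 6) / ((d:ℝ) - 2) := by
  exact stmt7_general (by omega) ⟨hu, hv, hequ, heqv⟩
    (integrableOn_energyDensity_of_exp_decay hε hu.continuousOn hu.continuousOn_dI hdecay)
    hvlim hne
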